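/- arXiv:math/0204346 — 2 statements merged into one kernel-verified Lean document; each statement's English description precedes it below -/
import Mathlib

section
/- There exists a unique formal power series F ∈ ℚ[[d₁,d₂,d₃]] such that (Cosh(F) + d₁·d₃·Sinh(F))² · φ(d₁+d₂) · φ(d₂+d₃) = φ(d₂) · φ(d₁+d₂+d₃). Equivalently, F is the unique solution of cosh(Fk) + d₁d₃·sinh(Fk)/k = √(φ(d₂)φ(d₁+d₂+d₃)/(φ(d₁+d₂)φ(d₂+d₃))), where k² = −d₁d₂d₃(d₁+d₂+d₃) and the square root is the one with constant term 1. Moreover the constant term of F is 1/24. -/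
noncomputable section

abbrev R3 := MvPowerSeries (Fin 3) ℚ

def d (i : Fin 3) : R3 := MvPowerSeries.X i

def mdeg {n : ℕ} (m : Fin n →₀ ℕ) : ℕ := m.sum fun _ k => k

/-- K = −d₁d₂d₃(d₁+d₂+d₃) -/
def K3 : R3 := -(d 0 * d 1 * d 2 * (d 0 + d 1 + d 2))

/-- Cosh(F) = Σ F^{2n} K^n/(2n)! (coefficientwise finite sum) -/
def Cosh (F : R3) : R3 := fun m => ∑ n ∈ Finset.range (mdeg m + 1),
  MvPowerSeries.coeff (R := ℚ) m ((((2*n).factorial : ℚ))⁻¹ • (F ^ (2*n) * K3 ^ n))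

def Sinh (F : R3) : R3 := fun m => ∑ n ∈ Finset.range (mdeg m + 1),
  MvPowerSeries.coeff (R := ℚ) m ((((2*n+1).factorial : ℚ))⁻¹ • (F ^ (2*n+1) * K3 ^ n))

/-- φ(g) = Σ g^{2n}/(4^n (2n+1)!) for g with zero constant term -/
def phi3 (g : R3) : R3 := fun m => ∑ n ∈ Finset.range (mdeg m + 1),
  MvPowerSeries.coeff (R := ℚ) m ((((4:ℚ)^n * (2*n+1).factorial)⁻¹) • g ^ (2*n))

@[simp]
theorem mdeg_zero {n : ℕ} : mdeg (0 : Fin n →₀ ℕ) = 0 := Finsupp.sum_zero_index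

theorem mdeg_add {n : ℕ} (a b : Fin n →₀ ℕ) : mdeg (a + b) = mdeg a + mdeg b :=
  Finsupp.sum_add_index' (fun _ => rfl) (fun _ _ _ => rfl)

@[simp]
theorem mdeg_single {n : ℕ} (i : Fin n) (k : ℕ) : mdeg (Finsupp.single i k) = k :=
  Finsupp.sum_single_index rfl

/-- The ideal of power series of order at least `n`. -/
def orderIdeal (n : ℕ) : Ideal R3 where
  carrier := {f | ∀ m, mdeg m < n → MvPowerSeries.coeff m f = 0}
  add_mem' hf hg m hm := by rw [map_add, hf m hm, hg m hm, add_zero]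
  zero_mem' m _ := map_zero _
  smul_mem' c f hf m hm := by
    rw [smul_eq_mul, MvPowerSeries.coeff_mul]
    refine Finset.sum_eq_zero fun p hp => ?_
    have h := congrArg mdeg (Finset.HasAntidiagonal.mem_antidiagonal.mp hp)
    rw [mdeg_add] at h
    rw [hf p.2 (by omega), mul_zero]

theorem orderIdeal_anti {a b : ℕ} (h : a ≤ b) : orderIdeal b ≤ orderIdeal a :=
  fun _ hf m hm => hf m (hm.trans_le h)

theorem mem_orderIdeal_zero (f : R3) : f ∈ orderIdeal 0 := fun _ hm => absurd hm (Nat.not_lt_zero _)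

theorem mul_mem_orderIdeal {a b : ℕ} {f g : R3} (hf : f ∈ orderIdeal a) (hg : g ∈ orderIdeal b) :
    f * g ∈ orderIdeal (a + b) := by
  intro m hm
  rw [MvPowerSeries.coeff_mul]
  refine Finset.sum_eq_zero fun p hp => ?_
  have h := congrArg mdeg (Finset.HasAntidiagonal.mem_antidiagonal.mp hp)
  rw [mdeg_add] at h
  rcases lt_or_ge (mdeg p.1) a with h1 | h1
  · rw [hf p.1 h1, zero_mul]
  · rw [hg p.2 (by omega), mul_zero]

theorem pow_mem_orderIdeal {a : ℕ} {f : R3} (hf : f ∈ orderIdeal a) (n : ℕ) :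
    f ^ n ∈ orderIdeal (a * n) := by
  induction n with
  | zero => exact mem_orderIdeal_zero _
  | succ n ih => rw [pow_succ, Nat.mul_succ]; exact mul_mem_orderIdeal ih hf

theorem smul_mem_orderIdeal {n : ℕ} (c : ℚ) {f : R3} (hf : f ∈ orderIdeal n) :
    c • f ∈ orderIdeal n := by
  rw [MvPowerSeries.smul_eq_C_mul]
  exact Ideal.mul_mem_left _ _ hf

theorem eq_of_forall_sub_mem_orderIdeal {f g : R3} (h : ∀ n, f - g ∈ orderIdeal n) : f = g := by
  ext m
  exact sub_eq_zero.mp ((map_sub _ _ _).symm.trans (h _ m (Nat.lt_succ_self _)))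

theorem d_mem_orderIdeal (i : Fin 3) : d i ∈ orderIdeal 1 := by
  intro m hm
  rw [d, MvPowerSeries.coeff_X, if_neg]
  rintro rfl
  simp at hm

/-- The sum of a family of power series whose `n`-th term has order at least `n`. -/
def orderSum (t : ℕ → R3) : R3 := fun m =>
  ∑ n ∈ Finset.range (mdeg m + 1), MvPowerSeries.coeff m (t n)

theorem coeff_orderSum (t : ℕ → R3) (m : Fin 3 →₀ ℕ) : MvPowerSeries.coeff m (orderSum t) =
    ∑ n ∈ Finset.range (mdeg m + 1), MvPowerSeries.coeff m (t n) := rfl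

theorem orderSum_sub_sum_mem {t : ℕ → R3} (ht : ∀ n, t n ∈ orderIdeal n) (N : ℕ) :
    orderSum t - ∑ n ∈ Finset.range N, t n ∈ orderIdeal N := by
  intro m hm
  rw [map_sub, coeff_orderSum, map_sum, sub_eq_zero]
  refine Finset.sum_subset (Finset.range_mono hm) fun n _ hn => ht n m ?_
  simpa using hn

theorem orderSum_sub_orderSum_mem {s t : ℕ → R3} {N : ℕ} (h : ∀ n, s n - t n ∈ orderIdeal N) :
    orderSum s - orderSum t ∈ orderIdeal N := by
  intro m hm
  rw [map_sub, coeff_orderSum, coeff_orderSum, ← Finset.sum_sub_distrib]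
  exact Finset.sum_eq_zero fun n _ => (map_sub _ _ _).symm.trans (h n m hm)

theorem orderSum_eq_add_mul {s t : ℕ → R3} {a : R3} (hs : ∀ n, s n ∈ orderIdeal n)
    (ht : ∀ n, t n ∈ orderIdeal n) (h : ∀ n, s (n + 1) = a * t n) :
    orderSum s = s 0 + a * orderSum t := by
  refine eq_of_forall_sub_mem_orderIdeal fun N => ?_
  have h1 := orderIdeal_anti N.le_succ (orderSum_sub_sum_mem hs (N + 1))
  have h2 := Ideal.mul_mem_left _ a (orderSum_sub_sum_mem ht N)
  rw [Finset.sum_range_succ'] at h1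
  simp only [h, ← Finset.mul_sum] at h1
  convert sub_mem h1 h2 using 1
  ring

/-- A self-map of the power series ring that raises the order of agreement has a unique
fixed point. -/
theorem existsUnique_fixedPoint {Ψ : R3 → R3}
    (h : ∀ n F G, F - G ∈ orderIdeal n → Ψ F - Ψ G ∈ orderIdeal (n + 1)) :
    ∃! F, F = Ψ F := by
  have step : ∀ n, Ψ^[n + 1] 0 - Ψ^[n] 0 ∈ orderIdeal n := by
    intro n
    induction n with
    | zero => exact mem_orderIdeal_zero _
    | succ n ih =>
      have hq := h _ _ _ ih
      rwa [← Function.iterate_succ_apply' Ψ, ← Function.iterate_succ_apply' Ψ] at hq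
  have tele : ∀ n, ∑ k ∈ Finset.range n, (Ψ^[k + 1] 0 - Ψ^[k] 0) = Ψ^[n] 0 := fun n => by
    rw [Finset.sum_range_sub (fun k => Ψ^[k] 0), Function.iterate_zero_apply, sub_zero]
  have approx : ∀ n, orderSum (fun k => Ψ^[k + 1] 0 - Ψ^[k] 0) - Ψ^[n] 0 ∈ orderIdeal n :=
    fun n => by
      have := orderSum_sub_sum_mem step n
      rwa [tele] at this
  refine ⟨orderSum fun k => Ψ^[k + 1] 0 - Ψ^[k] 0,
    eq_of_forall_sub_mem_orderIdeal fun n => ?_, fun G hG => ?_⟩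
  · have h1 := orderIdeal_anti n.le_succ (approx (n + 1))
    have h2 := orderIdeal_anti n.le_succ (h _ _ _ (approx n))
    rw [Function.iterate_succ_apply'] at h1
    convert sub_mem h1 h2 using 1
    ring
  · refine eq_of_forall_sub_mem_orderIdeal fun n => ?_
    have hn : G - Ψ^[n] 0 ∈ orderIdeal n := by
      induction n with
      | zero => exact mem_orderIdeal_zero _
      | succ n ih =>
        rw [Function.iterate_succ_apply', hG]
        exact h _ _ _ ih
    convert sub_mem hn (approx n) using 1
    ring

theorem K3_mem_orderIdeal : K3 ∈ orderIdeal 1 :=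
  neg_mem (Ideal.mul_mem_right _ _ (Ideal.mul_mem_left _ _ (d_mem_orderIdeal 2)))

/-- The series `(Cosh F - 1) / K`. -/
def coshTail (F : R3) : R3 :=
  orderSum fun n => ((2 * (n + 1)).factorial : ℚ)⁻¹ • (F ^ (2 * (n + 1)) * K3 ^ n)

/-- The series `(Sinh F - F) / K`. -/
def sinhTail (F : R3) : R3 :=
  orderSum fun n => ((2 * (n + 1) + 1).factorial : ℚ)⁻¹ • (F ^ (2 * (n + 1) + 1) * K3 ^ n)

theorem smul_mul_K3_pow_mem (c : ℚ) (f : R3) (n : ℕ) : c • (f * K3 ^ n) ∈ orderIdeal n :=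
  smul_mem_orderIdeal _ (Ideal.mul_mem_left _ _ (by
    simpa using pow_mem_orderIdeal K3_mem_orderIdeal n))

theorem Cosh_eq (F : R3) : Cosh F = 1 + K3 * coshTail F := by
  have h : Cosh F = _ + K3 * coshTail F := orderSum_eq_add_mul
    (fun n => smul_mul_K3_pow_mem _ _ n) (fun n => smul_mul_K3_pow_mem _ _ n) fun n => by
      rw [mul_smul_comm, pow_succ K3, mul_left_comm K3, mul_comm K3]
  simpa using h

theorem Sinh_eq (F : R3) : Sinh F = F + K3 * sinhTail F := by
  have h : Sinh F = _ + K3 * sinhTail F := orderSum_eq_add_mul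
    (fun n => smul_mul_K3_pow_mem _ _ n) (fun n => smul_mul_K3_pow_mem _ _ n) fun n => by
      rw [mul_smul_comm, pow_succ K3, mul_left_comm K3, mul_comm K3]
  simpa using h

theorem smul_pow_mul_sub_mem {n : ℕ} {F G : R3} (h : F - G ∈ orderIdeal n) (c : ℚ) (k : ℕ)
    (a : R3) : c • (F ^ k * a) - c • (G ^ k * a) ∈ orderIdeal n := by
  rw [← smul_sub, ← sub_mul]
  exact smul_mem_orderIdeal _ (Ideal.mul_mem_right _ _
    (Ideal.mem_of_dvd _ (sub_dvd_pow_sub_pow F G k) h))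

theorem coshTail_sub_mem {n : ℕ} {F G : R3} (h : F - G ∈ orderIdeal n) :
    coshTail F - coshTail G ∈ orderIdeal n :=
  orderSum_sub_orderSum_mem fun _ => smul_pow_mul_sub_mem h _ _ _

theorem sinhTail_sub_mem {n : ℕ} {F G : R3} (h : F - G ∈ orderIdeal n) :
    sinhTail F - sinhTail G ∈ orderIdeal n :=
  orderSum_sub_orderSum_mem fun _ => smul_pow_mul_sub_mem h _ _ _

/-- The series `(Cosh F + d₁ d₃ Sinh F - 1) / (d₁ d₃)`. -/
def reduced (F : R3) : R3 := F + K3 * sinhTail F - d 1 * (d 0 + d 1 + d 2) * coshTail F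

theorem Cosh_add_Sinh_eq (F : R3) : Cosh F + d 0 * d 2 * Sinh F = 1 + d 0 * d 2 * reduced F := by
  rw [Cosh_eq, Sinh_eq, reduced, K3]; ring

theorem reduced_sub_mem {n : ℕ} {F G : R3} (h : F - G ∈ orderIdeal n) :
    reduced F - reduced G ∈ orderIdeal n := by
  convert sub_mem (add_mem h (Ideal.mul_mem_left _ K3 (sinhTail_sub_mem h)))
    (Ideal.mul_mem_left _ (d 1 * (d 0 + d 1 + d 2)) (coshTail_sub_mem h)) using 1
  simp only [reduced]; ring

theorem reduced_sub_self_sub_mem {n : ℕ} {F G : R3} (h : F - G ∈ orderIdeal n) :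
    (reduced F - F) - (reduced G - G) ∈ orderIdeal (n + 1) := by
  have h1 := mul_mem_orderIdeal (sinhTail_sub_mem h) K3_mem_orderIdeal
  have h2 := mul_mem_orderIdeal (coshTail_sub_mem h)
    (Ideal.mul_mem_right (d 0 + d 1 + d 2) _ (d_mem_orderIdeal 1))
  convert sub_mem h1 h2 using 1
  simp only [reduced]; ring

/-- Unique solvability of `2 T + d₁ d₃ T² = M` for `T = reduced F`. -/
theorem existsUnique_reduced (M : R3) :
    ∃! F, 2 * reduced F + d 0 * d 2 * reduced F ^ 2 = M := by
  have hC : (MvPowerSeries.C (1 / 2 : ℚ) : R3) * 2 = 1 := by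
    rw [← map_ofNat (MvPowerSeries.C : ℚ →+* R3) 2, ← map_mul]
    norm_num
  have key := existsUnique_fixedPoint (Ψ := fun F =>
    MvPowerSeries.C (1 / 2 : ℚ) * (M - d 0 * d 2 * reduced F ^ 2) - (reduced F - F)) ?_
  · refine (existsUnique_congr fun F => ?_).mp key
    constructor
    · intro h
      linear_combination 2 * h + (M - d 0 * d 2 * reduced F ^ 2) * hC
    · intro h
      linear_combination (MvPowerSeries.C (1 / 2 : ℚ)) * h - reduced F * hC
  · intro n F G h
    have h1 := mul_mem_orderIdeal (reduced_sub_mem h) (d_mem_orderIdeal 0)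
    have h2 := Ideal.mul_mem_left _
      (MvPowerSeries.C (1 / 2 : ℚ) * d 2 * (reduced F + reduced G)) h1
    convert neg_mem (add_mem h2 (reduced_sub_self_sub_mem h)) using 1
    ring

theorem phi3_sub_mem {g : R3} (hg : g ∈ orderIdeal 1) :
    phi3 g - (1 + MvPowerSeries.C (1 / 24 : ℚ) * g ^ 2) ∈ orderIdeal 3 := by
  have ht : ∀ n : ℕ, ((4 : ℚ) ^ n * (2 * n + 1).factorial)⁻¹ • g ^ (2 * n) ∈ orderIdeal (2 * n) :=
    fun n => smul_mem_orderIdeal _ (by simpa using pow_mem_orderIdeal hg (2 * n))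
  have h := orderSum_sub_sum_mem (fun n => orderIdeal_anti (by omega : n ≤ 2 * n) (ht n)) 3
  convert add_mem h (orderIdeal_anti (by norm_num) (ht 2)) using 1
  rw [Finset.sum_range_succ, ← sub_sub (orderSum _), sub_add_cancel, ← MvPowerSeries.smul_eq_C_mul]
  refine congrArg₂ _ rfl ?_
  norm_num [Finset.sum_range_succ, Nat.factorial]

theorem constantCoeff_eq_zero_of_mem {f : R3} {n : ℕ} (hf : f ∈ orderIdeal (n + 1)) :
    MvPowerSeries.constantCoeff f = 0 := hf 0 (by simp)

theorem constantCoeff_phi3 {g : R3} (hg : g ∈ orderIdeal 1) :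
    MvPowerSeries.constantCoeff (phi3 g) = 1 := by
  have h := constantCoeff_eq_zero_of_mem (phi3_sub_mem hg)
  simpa [constantCoeff_eq_zero_of_mem hg, sub_eq_zero] using h

theorem d_dvd_phi3_sub (g : R3) (i : Fin 3) : d i ∣ phi3 (g + d i) - phi3 g := by
  rw [d, MvPowerSeries.X_dvd_iff]
  intro m hm
  have h : ∀ k, MvPowerSeries.coeff m ((g + MvPowerSeries.X i) ^ k - g ^ k) = 0 := fun k =>
    MvPowerSeries.X_dvd_iff.mp ((by simp : MvPowerSeries.X i ∣ g + MvPowerSeries.X i - g).trans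
      (sub_dvd_pow_sub_pow _ _ k)) m hm
  rw [map_sub]
  change (orderSum _) m - (orderSum _) m = 0
  simp only [orderSum, ← Finset.sum_sub_distrib, ← map_sub, ← smul_sub, map_smul, h, smul_zero,
    Finset.sum_const_zero]

theorem d_mul_d_dvd {f : R3} (h0 : d 0 ∣ f) (h2 : d 2 ∣ f) : d 0 * d 2 ∣ f := by
  obtain ⟨g, rfl⟩ := h0
  refine mul_dvd_mul_left _ (MvPowerSeries.X_dvd_iff.mpr fun m hm => ?_)
  have h := MvPowerSeries.X_dvd_iff.mp h2 (Finsupp.single 0 1 + m) (by simp [hm])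
  rwa [d, MvPowerSeries.X, MvPowerSeries.coeff_add_monomial_mul, one_mul] at h

theorem constantCoeff_eq_zero_of_mul_mem {f : R3} (h : d 0 * d 2 * f ∈ orderIdeal 3) :
    MvPowerSeries.constantCoeff f = 0 := by
  have hq := h (Finsupp.single 0 1 + Finsupp.single 2 1 + 0) (by simp [mdeg_add])
  rwa [d, d, MvPowerSeries.X, MvPowerSeries.X, MvPowerSeries.monomial_mul_monomial,
    MvPowerSeries.coeff_add_monomial_mul, one_mul, one_mul] at hq

/-- The difference `φ(d₂)φ(d₁+d₂+d₃) - φ(d₁+d₂)φ(d₂+d₃)` is `d₁ d₃ / 12` to leading order. -/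
theorem exists_phi3_mul_sub_eq : ∃ N : R3, MvPowerSeries.constantCoeff N = 1 / 12 ∧
    phi3 (d 1) * phi3 (d 0 + d 1 + d 2) - phi3 (d 0 + d 1) * phi3 (d 1 + d 2)
      = d 0 * d 2 * N := by
  have e1 : d 0 + d 1 = d 1 + d 0 := add_comm _ _
  have e2 : d 0 + d 1 + d 2 = d 1 + d 2 + d 0 := by ring
  obtain ⟨N, hN⟩ : d 0 * d 2 ∣
      phi3 (d 1) * phi3 (d 0 + d 1 + d 2) - phi3 (d 0 + d 1) * phi3 (d 1 + d 2) := by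
    apply d_mul_d_dvd
    · rw [e2, e1]
      convert dvd_sub ((d_dvd_phi3_sub (d 1 + d 2) 0).mul_left (phi3 (d 1)))
        ((d_dvd_phi3_sub (d 1) 0).mul_right (phi3 (d 1 + d 2))) using 1
      ring
    · convert dvd_sub ((d_dvd_phi3_sub (d 0 + d 1) 2).mul_left (phi3 (d 1)))
        ((d_dvd_phi3_sub (d 1) 2).mul_left (phi3 (d 0 + d 1))) using 1
      ring
  refine ⟨N, ?_, hN⟩
  have hd := d_mem_orderIdeal
  have quad : ∀ {f g : R3}, f ∈ orderIdeal 1 → g ∈ orderIdeal 1 →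
      phi3 f * phi3 g - (1 + MvPowerSeries.C (1 / 24 : ℚ) * (f ^ 2 + g ^ 2)) ∈ orderIdeal 3 := by
    intro f g hf hg
    have h1 := Ideal.mul_mem_right (phi3 g) _ (phi3_sub_mem hf)
    have h2 := Ideal.mul_mem_left _ (1 + MvPowerSeries.C (1 / 24 : ℚ) * f ^ 2) (phi3_sub_mem hg)
    have h3 := Ideal.mul_mem_left _ (MvPowerSeries.C (1 / 24 : ℚ) * MvPowerSeries.C (1 / 24 : ℚ))
      (orderIdeal_anti (by norm_num : 3 ≤ 1 * 2 + 1 * 2)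
        (mul_mem_orderIdeal (pow_mem_orderIdeal hf 2) (pow_mem_orderIdeal hg 2)))
    convert add_mem (add_mem h1 h2) h3 using 1
    ring
  have hC : (MvPowerSeries.C (1 / 12 : ℚ) : R3) = 2 * MvPowerSeries.C (1 / 24 : ℚ) := by
    rw [← map_ofNat (MvPowerSeries.C : ℚ →+* R3) 2, ← map_mul]
    norm_num
  have h : d 0 * d 2 * (N - MvPowerSeries.C (1 / 12 : ℚ)) ∈ orderIdeal 3 := by
    convert sub_mem (quad (hd 1) (add_mem (add_mem (hd 0) (hd 1)) (hd 2)))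
      (quad (add_mem (hd 0) (hd 1)) (add_mem (hd 1) (hd 2))) using 1
    rw [mul_sub, ← hN, hC]
    ring
  simpa [sub_eq_zero] using constantCoeff_eq_zero_of_mul_mem h

theorem constantCoeff_d (i : Fin 3) : MvPowerSeries.constantCoeff (d i) = 0 :=
  MvPowerSeries.constantCoeff_X i

theorem d_ne_zero (i : Fin 3) : d i ≠ 0 := fun h => by
  have hq := congrArg (MvPowerSeries.coeff (Finsupp.single i 1)) h
  simp [d] at hq

theorem constantCoeff_reduced (F : R3) :
    MvPowerSeries.constantCoeff (reduced F) = MvPowerSeries.constantCoeff F := by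
  simp [reduced, K3, constantCoeff_d]

theorem exists_equation_iff : ∃ M : R3, MvPowerSeries.constantCoeff M = 1 / 12 ∧ ∀ F : R3,
    (Cosh F + d 0 * d 2 * Sinh F) ^ 2 * phi3 (d 0 + d 1) * phi3 (d 1 + d 2)
        = phi3 (d 1) * phi3 (d 0 + d 1 + d 2) ↔
      2 * reduced F + d 0 * d 2 * reduced F ^ 2 = M := by
  obtain ⟨N, hN1, hN⟩ := exists_phi3_mul_sub_eq
  have hd := d_mem_orderIdeal
  have hU1 : MvPowerSeries.constantCoeff (phi3 (d 0 + d 1) * phi3 (d 1 + d 2)) = 1 := by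
    rw [map_mul, constantCoeff_phi3 (add_mem (hd 0) (hd 1)),
      constantCoeff_phi3 (add_mem (hd 1) (hd 2)), one_mul]
  set U := phi3 (d 0 + d 1) * phi3 (d 1 + d 2)
  have hUV : U * U⁻¹ = 1 := MvPowerSeries.mul_inv_cancel _ (by rw [hU1]; exact one_ne_zero)
  have hA : d 0 * d 2 ≠ 0 := mul_ne_zero (d_ne_zero 0) (d_ne_zero 2)
  refine ⟨N * U⁻¹, by simp [hN1, hU1], fun F => ?_⟩
  rw [Cosh_add_Sinh_eq, mul_assoc]
  constructor
  · intro h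
    have hq : (2 * reduced F + d 0 * d 2 * reduced F ^ 2) * U = N :=
      mul_left_cancel₀ hA (by linear_combination h + hN)
    rw [← hq, mul_assoc _ U, hUV, mul_one]
  · intro h
    linear_combination d 0 * d 2 * U * h - hN + d 0 * d 2 * N * hUV

theorem stmt0 :
    (∃! F : R3, (Cosh F + d 0 * d 2 * Sinh F)^2 * phi3 (d 0 + d 1) * phi3 (d 1 + d 2)
        = phi3 (d 1) * phi3 (d 0 + d 1 + d 2)) ∧
    (∀ F : R3, (Cosh F + d 0 * d 2 * Sinh F)^2 * phi3 (d 0 + d 1) * phi3 (d 1 + d 2)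
        = phi3 (d 1) * phi3 (d 0 + d 1 + d 2) →
      MvPowerSeries.constantCoeff (σ := Fin 3) (R := ℚ) F = 1/24) := by
  obtain ⟨M, hM, hiff⟩ := exists_equation_iff
  refine ⟨(existsUnique_congr hiff).mpr (existsUnique_reduced M), fun F hF => ?_⟩
  have h := congrArg (MvPowerSeries.constantCoeff (σ := Fin 3) (R := ℚ)) ((hiff F).mp hF)
  rw [hM, two_mul] at h
  simp [constantCoeff_reduced, constantCoeff_d] at h
  linarith
end
end

section
/- In the series Ψ₀, the coefficient of u^p·v^q vanishes whenever p > q; hence Ψ₀ lies in ℚ[u][[v]], the coefficient of v^q being a polynomial in u of degree at most q. Moreover the coefficient of u^q·v^q in Ψ₀ is nonzero, so this polynomial has degree exactly q. -/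
noncomputable section

abbrev R2 := MvPowerSeries (Fin 2) ℚ

def u : R2 := MvPowerSeries.X 0
def v : R2 := MvPowerSeries.X 1

/-- generalized binomial coefficient C(−1/2, n) = (−1)ⁿ (2n choose n)/4ⁿ -/
def cb (n : ℕ) : ℚ := (-1)^n * (Nat.choose (2*n) n : ℚ) / 4^n

/-- Ψ₀ = Σ_{p,q} C(−1/2,p) C(−1/2,q) u^p v^q (u+2)^{p+q+1}/(2(p+q+1))
(coefficientwise finite sum). -/
def Psi0 : R2 := fun m =>
  ∑ p ∈ Finset.range (mdeg m + 1), ∑ q ∈ Finset.range (mdeg m + 1),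
    MvPowerSeries.coeff (R := ℚ) m ((cb p * cb q / (2*(p+q+1))) • (u ^ p * v ^ q * (u + 2) ^ (p+q+1)))

section

open Polynomial

/-- The terms with `p < N` of `Σ_p C(−1/2,p) u^p (u+2)^(p+q+1) / (p+q+1)`. -/
def partialJ (q N : ℕ) : ℚ[X] :=
  ∑ p ∈ Finset.range N, C (cb p / (p + q + 1)) * (X ^ p * (X + 2) ^ (p + q + 1))

/-- The generalized binomial coefficient `C(1/2, n)`. -/
def halfChoose : ℕ → ℚ
  | 0 => 1
  | n + 1 => cb n / (2 * (n + 1))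

/-- The terms with `p < N` of `Σ_p C(1/2,p) (u(u+2))^p`. -/
def partialSqrt (N : ℕ) : ℚ[X] :=
  ∑ p ∈ Finset.range N, C (halfChoose p) * (X * (X + 2)) ^ p

theorem cb_zero : cb 0 = 1 := by simp [cb]

theorem cb_succ (n : ℕ) : cb (n + 1) = -(2 * n + 1) / (2 * (n + 1)) * cb n := by
  have h := Nat.succ_mul_centralBinom_succ n
  simp only [Nat.centralBinom] at h
  have h' : ((n : ℚ) + 1) * (Nat.choose (2 * (n + 1)) (n + 1) : ℚ)
      = 2 * (2 * n + 1) * (Nat.choose (2 * n) n : ℚ) := by exact_mod_cast h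
  have hn : (n : ℚ) + 1 ≠ 0 := by positivity
  have h'' : (Nat.choose (2 * (n + 1)) (n + 1) : ℚ)
      = 2 * (2 * n + 1) * (Nat.choose (2 * n) n : ℚ) / (n + 1) := by
    field_simp; linarith
  simp only [cb]
  rw [h'']
  field_simp
  ring

theorem cb_ne_zero (n : ℕ) : cb n ≠ 0 := by
  have : Nat.choose (2 * n) n ≠ 0 := (Nat.choose_pos (by omega)).ne'
  simp [cb, this]

theorem halfChoose_succ (n : ℕ) :
    2 * (n + 1) * halfChoose (n + 1) = -(2 * n - 1) * halfChoose n := by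
  have hn : (n : ℚ) + 1 ≠ 0 := by positivity
  cases n with
  | zero => simp [halfChoose, cb_zero]
  | succ m =>
    have hm : (m : ℚ) + 1 ≠ 0 := by positivity
    simp only [halfChoose, cb_succ m]
    push_cast at hn ⊢
    field_simp
    ring

theorem derivative_partialSqrt (N : ℕ) :
    (1 + X) * derivative (partialSqrt (N + 1)) = partialSqrt (N + 1)
      + C ((2 * N - 1) * halfChoose N) * (X * (X + 2)) ^ N := by
  induction N with
  | zero => simp [partialSqrt, halfChoose]
  | succ N ih =>
    have hstep : partialSqrt (N + 1 + 1)
        = partialSqrt (N + 1) + C (halfChoose (N + 1)) * (X * (X + 2)) ^ (N + 1) := by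
      simp only [partialSqrt, Finset.sum_range_succ _ (N + 1)]
    have hc : (2 * (N + 1) : ℚ[X]) * C (halfChoose (N + 1))
        = -(2 * N - 1) * C (halfChoose N) := by
      have := congrArg (C : ℚ → ℚ[X]) (halfChoose_succ N)
      simpa only [map_mul, map_add, map_sub, map_neg, map_natCast, map_one, map_ofNat] using this
    rw [hstep, derivative_add, mul_add, ih]
    simp only [derivative_mul, derivative_C, derivative_pow, derivative_X, derivative_add,
      derivative_ofNat, map_mul, map_sub, map_natCast, map_one, map_ofNat]
    push_cast
    linear_combination (X * (X + 2)) ^ N * hc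

theorem coeff_X_mul_X_add_two_pow {n N : ℕ} (h : n < N) :
    ((X * (X + 2) : ℚ[X]) ^ N).coeff n = 0 := by
  rw [mul_pow, coeff_X_pow_mul', if_neg (by omega)]

theorem coeff_partialSqrt (n N : ℕ) (h : n ≤ N) :
    (partialSqrt (N + 1)).coeff n = (1 + X : ℚ[X]).coeff n := by
  have hrec : ∀ m, m < N → ((m : ℚ) + 1) * (partialSqrt (N + 1)).coeff (m + 1)
      = (1 - m) * (partialSqrt (N + 1)).coeff m := by
    intro m hm
    have := congrArg (fun f => coeff f m) (derivative_partialSqrt N)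
    simp only [coeff_add, add_mul, one_mul, coeff_C_mul, coeff_X_mul_X_add_two_pow hm,
      coeff_derivative] at this
    cases m with
    | zero =>
      simp at this ⊢
      linarith
    | succ k =>
      simp only [coeff_X_mul, coeff_derivative] at this
      push_cast at this ⊢
      linarith
  induction n with
  | zero =>
    simp only [partialSqrt, Finset.sum_range_succ', coeff_add, finsetSum_coeff, coeff_C_mul]
    rw [Finset.sum_eq_zero fun p _ => by rw [coeff_X_mul_X_add_two_pow (by omega), mul_zero]]
    simp [halfChoose]
  | succ n ih =>
    have h1 := hrec n (by omega)
    rw [ih (by omega)] at h1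
    have hn : (n : ℚ) + 1 ≠ 0 := by positivity
    apply mul_left_cancel₀ hn
    rw [h1]
    rcases n with _ | _ | n <;> simp [coeff_one, coeff_X]

theorem partialJ_zero_rec (N : ℕ) :
    C (1 / 2) * X * partialJ 0 N + 1 = partialSqrt (N + 1) := by
  simp only [partialJ, partialSqrt, Finset.sum_range_succ', Finset.mul_sum]
  congr 1
  · refine Finset.sum_congr rfl fun p _ => ?_
    have : halfChoose (p + 1) = 1 / 2 * (cb p / (p + (0 : ℕ) + 1)) := by
      have hn : (p : ℚ) + 1 ≠ 0 := by positivity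
      simp only [halfChoose]
      push_cast
      field_simp
      simp
    rw [this, C_mul, mul_pow]
    ring
  · simp [halfChoose]

theorem partialJ_succ_rec (q N : ℕ) :
    C ((q : ℚ) + 1) * partialJ q (N + 1) + C ((q : ℚ) + 3 / 2) * X * partialJ (q + 1) N
      = (X + 2) ^ (q + 1) * partialSqrt (N + 1) := by
  induction N with
  | zero =>
    have hq : (q : ℚ) + 1 ≠ 0 := by positivity
    simp only [partialJ, partialSqrt, zero_add, Finset.sum_range_one, Finset.sum_range_zero,
      halfChoose, cb_zero, ← mul_assoc, ← C_mul]
    simp [hq]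
  | succ N ih =>
    have h1 : partialJ q (N + 1 + 1) = partialJ q (N + 1)
        + C (cb (N + 1) / ((N + 1 : ℕ) + q + 1)) * (X ^ (N + 1) * (X + 2) ^ (N + 1 + q + 1)) := by
      simp only [partialJ, Finset.sum_range_succ _ (N + 1)]
    have h2 : partialJ (q + 1) (N + 1) = partialJ (q + 1) N
        + C (cb N / (N + (q + 1 : ℕ) + 1)) * (X ^ N * (X + 2) ^ (N + (q + 1) + 1)) := by
      simp only [partialJ, Finset.sum_range_succ _ N]
    have h3 : partialSqrt (N + 1 + 1)
        = partialSqrt (N + 1) + C (halfChoose (N + 1)) * (X * (X + 2)) ^ (N + 1) := by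
      simp only [partialSqrt, Finset.sum_range_succ _ (N + 1)]
    have hc : ((q : ℚ) + 1) * (cb (N + 1) / ((N + 1 : ℕ) + q + 1))
        + ((q : ℚ) + 3 / 2) * (cb N / (N + (q + 1 : ℕ) + 1)) = halfChoose (N + 1) := by
      have hN : (N : ℚ) + 1 ≠ 0 := by positivity
      have hNq : (N : ℚ) + q + 2 ≠ 0 := by positivity
      rw [cb_succ, halfChoose]
      push_cast
      rw [show (N : ℚ) + 1 + q + 1 = N + q + 2 by ring,
        show (N : ℚ) + (q + 1) + 1 = N + q + 2 by ring]
      field_simp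
      ring
    rw [h1, h2, h3, ← hc, mul_pow]
    simp only [C_add, C_mul] at ih ⊢
    linear_combination ih

/-- If `f` and `g` agree up to degree `n`, then so do their multiples by `h`. -/
theorem coeff_mul_congr_right {f g h : ℚ[X]} {n : ℕ}
    (hfg : ∀ k ≤ n, f.coeff k = g.coeff k) : (h * f).coeff n = (h * g).coeff n := by
  simp only [coeff_mul]
  refine Finset.sum_congr rfl fun x hx => ?_
  rw [hfg x.2 (Finset.HasAntidiagonal.mem_antidiagonal.1 hx ▸ Nat.le_add_left _ _)]

theorem coeff_X_add_two_pow_mul (m n : ℕ) (h : m + 1 ≤ n) :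
    ((X + 2 : ℚ[X]) ^ m * (1 + X)).coeff n = if n = m + 1 then 1 else 0 := by
  have h2 : (X + 2 : ℚ[X]).Monic := monic_X_add_C (2 : ℚ)
  have h1 : (1 + X : ℚ[X]).Monic := by simpa [add_comm] using monic_X_add_C (1 : ℚ)
  have hm := (h2.pow m).mul h1
  have hd2 : (X + 2 : ℚ[X]).natDegree = 1 := natDegree_X_add_C (2 : ℚ)
  have hd1 : (1 + X : ℚ[X]).natDegree = 1 := by
    simpa [add_comm] using natDegree_X_add_C (1 : ℚ)
  have hd : ((X + 2 : ℚ[X]) ^ m * (1 + X)).natDegree = m + 1 := by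
    rw [(h2.pow m).natDegree_mul h1, h2.natDegree_pow, hd2, hd1, mul_one]
  split_ifs with hn
  · rw [hn, ← hd]
    exact hm
  · exact coeff_eq_zero_of_natDegree_lt (by omega)

theorem coeff_partialJ (q n N : ℕ) (hn : n < N) (hq : q ≤ n) :
    (partialJ q N).coeff n = if n = q then 1 / ((q : ℚ) + 1 / 2) else 0 := by
  induction q generalizing n N with
  | zero =>
    have h := congrArg (fun f => coeff f (n + 1)) (partialJ_zero_rec N)
    simp only [coeff_partialSqrt (n + 1) N hn, coeff_add, mul_assoc, coeff_C_mul, coeff_X_mul,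
      coeff_one, coeff_X] at h
    rcases n with _ | n
    · simp at h ⊢
      linarith
    · simpa using h
  | succ q ih =>
    have h := congrArg (fun f => coeff f (n + 1)) (partialJ_succ_rec q N)
    have hcongr : ((X + 2 : ℚ[X]) ^ (q + 1) * partialSqrt (N + 1)).coeff (n + 1)
        = ((X + 2 : ℚ[X]) ^ (q + 1) * (1 + X)).coeff (n + 1) :=
      coeff_mul_congr_right fun k hk => coeff_partialSqrt k N (by omega)
    simp only [hcongr, coeff_X_add_two_pow_mul (q + 1) (n + 1) (by omega), coeff_add, mul_assoc,
      coeff_C_mul, coeff_X_mul, ih (n + 1) (N + 1) (by omega) (by omega)] at h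
    rw [if_neg (by omega), mul_zero, zero_add] at h
    have hq0 : (q : ℚ) + 3 / 2 ≠ 0 := by positivity
    apply mul_left_cancel₀ hq0
    rw [h]
    simp only [add_left_inj]
    split_ifs
    · push_cast
      rw [show (q : ℚ) + 1 + 1 / 2 = q + 3 / 2 by ring, mul_one_div_cancel hq0]
    · simp

theorem coeff_aeval_u_mul_v_pow (f : ℚ[X]) (m n k : ℕ) :
    MvPowerSeries.coeff (R := ℚ) (Finsupp.single (0 : Fin 2) m + Finsupp.single (1 : Fin 2) n)
      (aeval u f * v ^ k) = if k = n then f.coeff m else 0 := by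
  induction f using Polynomial.induction_on' with
  | add f g hf hg =>
    rw [map_add, add_mul, map_add, hf, hg]
    split_ifs <;> simp
  | monomial j a =>
    have hmon : (aeval u (monomial j a) * v ^ k : R2)
        = MvPowerSeries.monomial (Finsupp.single (0 : Fin 2) j + Finsupp.single (1 : Fin 2) k) a := by
      rw [aeval_monomial, u, v, MvPowerSeries.X_pow_eq, MvPowerSeries.X_pow_eq,
        MvPowerSeries.algebraMap_apply, mul_assoc, MvPowerSeries.monomial_mul_monomial]
      ext d
      simp [MvPowerSeries.coeff_C_mul, MvPowerSeries.coeff_monomial]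
    have hexp : (Finsupp.single (0 : Fin 2) m + Finsupp.single (1 : Fin 2) n
        = Finsupp.single (0 : Fin 2) j + Finsupp.single (1 : Fin 2) k) ↔ m = j ∧ n = k := by
      constructor
      · intro h
        have h0 := DFunLike.congr_fun h 0
        have h1 := DFunLike.congr_fun h 1
        simp at h0 h1
        exact ⟨h0, h1⟩
      · rintro ⟨rfl, rfl⟩
        rfl
    classical
    rw [hmon, MvPowerSeries.coeff_monomial, coeff_monomial]
    simp only [hexp]
    grind

theorem coeff_Psi0 (m n : ℕ) :
    MvPowerSeries.coeff (R := ℚ) (Finsupp.single (0 : Fin 2) m + Finsupp.single (1 : Fin 2) n) Psi0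
      = cb n / 2 * (partialJ n (m + n + 1)).coeff m := by
  have hdeg : mdeg (Finsupp.single (0 : Fin 2) m + Finsupp.single (1 : Fin 2) n) = m + n := by
    rw [mdeg, Finsupp.sum_add_index'] <;> simp
  have hterm : ∀ p q : ℕ, (u ^ p * v ^ q * (u + 2) ^ (p + q + 1) : R2)
      = aeval u (X ^ p * (X + 2) ^ (p + q + 1) : ℚ[X]) * v ^ q := by
    intro p q
    simp only [map_mul, map_pow, map_add, aeval_X, map_ofNat]
    ring
  change (∑ p ∈ Finset.range (mdeg _ + 1), ∑ q ∈ Finset.range (mdeg _ + 1), _) = _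
  simp only [hdeg, hterm, map_smul, coeff_aeval_u_mul_v_pow]
  rw [partialJ, finsetSum_coeff, Finset.mul_sum]
  refine Finset.sum_congr rfl fun p _ => ?_
  rw [Finset.sum_eq_single n (fun q _ hq => by simp [hq])
    (fun h => absurd (Finset.mem_range.2 (by omega)) h), if_pos rfl, smul_eq_mul, coeff_C_mul]
  have hp : (p : ℚ) + n + 1 ≠ 0 := by positivity
  field_simp

end

theorem stmt5 :
    (∀ p q : ℕ, q < p →
      MvPowerSeries.coeff (R := ℚ) (Finsupp.single (0 : Fin 2) p + Finsupp.single (1 : Fin 2) q) Psi0 = 0) ∧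
    (∀ q : ℕ,
      MvPowerSeries.coeff (R := ℚ) (Finsupp.single (0 : Fin 2) q + Finsupp.single (1 : Fin 2) q) Psi0 ≠ 0) := by
  refine ⟨fun p q h => ?_, fun q => ?_⟩
  · rw [coeff_Psi0, coeff_partialJ q p _ (by omega) h.le, if_neg h.ne', mul_zero]
  · rw [coeff_Psi0, coeff_partialJ q q _ (by omega) le_rfl, if_pos rfl]
    have hq : (q : ℚ) + 1 / 2 ≠ 0 := by positivity
    exact mul_ne_zero (div_ne_zero (cb_ne_zero q) two_ne_zero) (one_div_ne_zero hq)
end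
end
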